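/- arXiv:2605.03839 — 4 statements merged into one kernel-verified Lean document; each statement's English description precedes it below -/
import Mathlib

section
/- Fix integers q ≥ 1 and k₁, k₂ ≥ 1, and a finite index set I of coordinates containing a distinguished coordinate j. For each s ∈ [k₁] and i ∈ I let P_i^(s) be a distribution on [q], and for each t ∈ [k₂] and i ∈ I let Q_i^(t) be a distribution on [q]; let ᾱ and β̄ be mixing weights on [k₁] and [k₂] respectively. Let K = #{s : ᾱ^(s) > 0} + #{t : β̄^(t) > 0}. Fix c ∈ [q] and set ℓ = min{ min_{s: ᾱ^(s)>0} P_j^(s)(c), min_{t: β̄^(t)>0} Q_j^(t)(c) }, P̄_j(c) = Σ_s ᾱ^(s) P_j^(s)(c), Q̄_j(c) = Σ_t β̄^(t) Q_j^(t)(c). Assume min{P̄_j(c), Q̄_j(c)} > ℓ, and define reweighted vectors ᾱ_c^(s) = ᾱ^(s)(P_j^(s)(c) − ℓ)/(P̄_j(c) − ℓ) and β̄_c^(t) = β̄^(t)(Q_j^(t)(c) − ℓ)/(Q̄_j(c) − ℓ). Let δ = max over subsets Λ ⊆ I with |Λ| ≤ K − 1 and assignments ω ∈ [q]^Λ of | Σ_s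 ᾱ^(s) ∏_{i∈Λ} P_i^(s)(ω_i) − Σ_t β̄^(t) ∏_{i∈Λ} Q_i^(t)(ω_i) |. Then for every subset Λ' ⊆ I \ {j} with |Λ'| ≤ K − 2 and every ω' ∈ [q]^{Λ'}: (min{P̄_j(c), Q̄_j(c)} − ℓ) · | Σ_s ᾱ_c^(s) ∏_{i∈Λ'} P_i^(s)(ω'_i) − Σ_t β̄_c^(t) ∏_{i∈Λ'} Q_i^(t)(ω'_i) | ≤ 3 δ. -/
/-!
Write `M_Λ` for the marginals of the original mixture of the `P^(s)`. The marginal on `Λ'` of its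
reweighting is a ratio `A / a` with `A = M_{Λ' ∪ {j}} - ℓ M_{Λ'}` and `a = M_{j} - ℓ`; let `B / b`
be the ratio for the `Q^(t)`. The reweighted weights are again mixing weights, so both ratios lie in
`[0, 1]`, and hence `min a b * |A / a - B / b| ≤ |A - B| + |a - b|`. The first term is at most
`(1 + ℓ) δ` and the second at most `δ`.
-/

open Finset

lemma min_mul_abs_sub_le {a b u v : ℝ} (hu : |u| ≤ 1) (hv : |v| ≤ 1) :
    min a b * |u - v| ≤ |a * u - b * v| + |a - b| := by
  wlog hab : a ≤ b generalizing a b u v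
  · simpa only [min_comm, abs_sub_comm] using this hv hu (le_of_not_ge hab)
  calc min a b * |u - v|
      ≤ |a| * |u - v| := by rw [min_eq_left hab]; gcongr; exact le_abs_self a
    _ = |(a * u - b * v) - (a - b) * v| := by rw [← abs_mul]; ring_nf
    _ ≤ |a * u - b * v| + |a - b| * |v| := by rw [← abs_mul]; exact abs_sub _ _
    _ ≤ |a * u - b * v| + |a - b| := by gcongr; exact mul_le_of_le_one_right (abs_nonneg _) hv

/-- Mixing weights `w` tilted by the excess of `x` over `ℓ` and renormalized: the `ᾱ_c` of the
theorem, with `x s = P_j^(s)(c)`. The normalization divides by `0` when the mean of `x` is `ℓ`. -/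
noncomputable def reweight {κ : Type*} [Fintype κ] (w x : κ → ℝ) (ℓ : ℝ) (s : κ) : ℝ :=
  w s * (x s - ℓ) / ((∑ s', w s' * x s') - ℓ)

/-- The probability that a mixture of product distributions, with weights `w` and coordinate
distributions `P s i`, agrees with `ω` on `Λ`. The assignment `ω` is total, its values outside `Λ`
being irrelevant, and neither `w` nor `P s i` is required to be normalized. -/
def mixtureMarginal {κ ι : Type*} {σ : ι → Type*} [Fintype κ] (w : κ → ℝ)
    (P : κ → (i : ι) → σ i → ℝ) (Λ : Finset ι) (ω : (i : ι) → σ i) : ℝ :=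
  ∑ s, w s * ∏ i ∈ Λ, P s i (ω i)

section Mixture

variable {κ κ₁ κ₂ ι : Type*} {σ : ι → Type*} [Fintype κ] [Fintype κ₁] [Fintype κ₂]

lemma reweight_mem_stdSimplex {w x : κ → ℝ} {ℓ : ℝ} (hw : w ∈ stdSimplex ℝ κ)
    (hx : ∀ s, 0 < w s → ℓ ≤ x s) (hℓ : ℓ < ∑ s, w s * x s) :
    reweight w x ℓ ∈ stdSimplex ℝ κ := by
  have htilt_nonneg (s : κ) : 0 ≤ w s * (x s - ℓ) := by
    rcases (hw.1 s).eq_or_lt with h | h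
    · simp [← h]
    · exact mul_nonneg h.le (sub_nonneg.2 (hx s h))
  have htilt_sum : ∑ s, w s * (x s - ℓ) = (∑ s, w s * x s) - ℓ := by
    simp only [mul_sub, sum_sub_distrib, ← sum_mul, hw.2, one_mul]
  refine ⟨fun s => div_nonneg (htilt_nonneg s) (sub_pos.2 hℓ).le, ?_⟩
  simp only [reweight]
  rw [← sum_div, htilt_sum, div_self (sub_pos.2 hℓ).ne']

lemma mixtureMarginal_mem_Icc {w : κ → ℝ} {P : κ → (i : ι) → σ i → ℝ}
    (hw : w ∈ stdSimplex ℝ κ) (hP : ∀ s i a, P s i a ∈ Set.Icc 0 1)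
    (Λ : Finset ι) (ω : (i : ι) → σ i) : mixtureMarginal w P Λ ω ∈ Set.Icc 0 1 :=
  (convex_Icc (0 : ℝ) 1).sum_mem (fun s _ => hw.1 s) hw.2 fun s _ =>
    ⟨prod_nonneg fun i _ => (hP s i _).1,
      prod_le_one (fun i _ => (hP s i _).1) fun i _ => (hP s i _).2⟩

lemma mixtureMarginal_singleton (w : κ → ℝ) (P : κ → (i : ι) → σ i → ℝ) (j : ι)
    (ω : (i : ι) → σ i) : mixtureMarginal w P {j} ω = ∑ s, w s * P s j (ω j) := by
  simp only [mixtureMarginal, prod_singleton]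

variable [DecidableEq ι] {j : ι} {Λ : Finset ι}

lemma mixtureMarginal_update_of_notMem (w : κ → ℝ) (P : κ → (i : ι) → σ i → ℝ) (hj : j ∉ Λ)
    (ω : (i : ι) → σ i) (c : σ j) :
    mixtureMarginal w P Λ (Function.update ω j c) = mixtureMarginal w P Λ ω := by
  refine sum_congr rfl fun s _ => congrArg (w s * ·) (prod_congr rfl fun i hi => ?_)
  rw [Function.update_of_ne (ne_of_mem_of_not_mem hi hj)]

lemma mixtureMarginal_insert (w : κ → ℝ) (P : κ → (i : ι) → σ i → ℝ) (hj : j ∉ Λ)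
    (ω : (i : ι) → σ i) :
    mixtureMarginal w P (insert j Λ) ω = mixtureMarginal (fun s => w s * P s j (ω j)) P Λ ω := by
  simp only [mixtureMarginal, prod_insert hj, mul_assoc]

lemma mul_mixtureMarginal_reweight {w : κ → ℝ} {P : κ → (i : ι) → σ i → ℝ} {c : σ j} {ℓ : ℝ}
    (hj : j ∉ Λ) (hℓ : ∑ s, w s * P s j c ≠ ℓ) (ω : (i : ι) → σ i) :
    ((∑ s, w s * P s j c) - ℓ) * mixtureMarginal (reweight w (P · j c) ℓ) P Λ ω =
      mixtureMarginal w P (insert j Λ) (Function.update ω j c) - ℓ * mixtureMarginal w P Λ ω := by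
  rw [mixtureMarginal_insert w P hj, mixtureMarginal_update_of_notMem _ P hj, Function.update_self]
  simp only [mixtureMarginal, reweight, mul_sum, ← sum_sub_distrib]
  refine sum_congr rfl fun s _ => ?_
  rw [← mul_assoc, mul_div_cancel₀ _ (sub_ne_zero.2 hℓ)]
  ring

lemma min_sub_mul_abs_mixtureMarginal_reweight_sub_le
    {P : κ₁ → (i : ι) → σ i → ℝ} {Q : κ₂ → (i : ι) → σ i → ℝ}
    (hP : ∀ s i a, P s i a ∈ Set.Icc 0 1) (hQ : ∀ t i a, Q t i a ∈ Set.Icc 0 1)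
    {α : κ₁ → ℝ} {β : κ₂ → ℝ} (hα : α ∈ stdSimplex ℝ κ₁) (hβ : β ∈ stdSimplex ℝ κ₂)
    {c : σ j} {ℓ : ℝ} (hℓP : ∀ s, 0 < α s → ℓ ≤ P s j c) (hℓQ : ∀ t, 0 < β t → ℓ ≤ Q t j c)
    (hmin : ℓ < min (∑ s, α s * P s j c) (∑ t, β t * Q t j c))
    (hj : j ∉ Λ) (ω : (i : ι) → σ i) :
    (min (∑ s, α s * P s j c) (∑ t, β t * Q t j c) - ℓ) *
      |mixtureMarginal (reweight α (P · j c) ℓ) P Λ ω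
        - mixtureMarginal (reweight β (Q · j c) ℓ) Q Λ ω|
      ≤ |mixtureMarginal α P (insert j Λ) (Function.update ω j c)
            - mixtureMarginal β Q (insert j Λ) (Function.update ω j c)|
        + |ℓ| * |mixtureMarginal α P Λ ω - mixtureMarginal β Q Λ ω|
        + |(∑ s, α s * P s j c) - ∑ t, β t * Q t j c| := by
  obtain ⟨hℓα, hℓβ⟩ := lt_min_iff.1 hmin
  have hu := mixtureMarginal_mem_Icc (reweight_mem_stdSimplex hα hℓP hℓα) hP Λ ω
  have hv := mixtureMarginal_mem_Icc (reweight_mem_stdSimplex hβ hℓQ hℓβ) hQ Λ ω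
  have hratio := min_mul_abs_sub_le (a := (∑ s, α s * P s j c) - ℓ)
    (b := (∑ t, β t * Q t j c) - ℓ) ((abs_of_nonneg hu.1).trans_le hu.2)
    ((abs_of_nonneg hv.1).trans_le hv.2)
  rw [mul_mixtureMarginal_reweight hj hℓα.ne', mul_mixtureMarginal_reweight hj hℓβ.ne',
    sub_sub_sub_cancel_right, min_sub_sub_right, sub_sub_sub_comm, ← mul_sub] at hratio
  refine hratio.trans (add_le_add_left ?_ _)
  rw [← abs_mul]
  exact abs_sub _ _

theorem reweighted_discrepancy_bound_general
    {P : κ₁ → (i : ι) → σ i → ℝ} {Q : κ₂ → (i : ι) → σ i → ℝ}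
    (hP : ∀ s i a, P s i a ∈ Set.Icc 0 1) (hQ : ∀ t i a, Q t i a ∈ Set.Icc 0 1)
    {α : κ₁ → ℝ} {β : κ₂ → ℝ} (hα : α ∈ stdSimplex ℝ κ₁) (hβ : β ∈ stdSimplex ℝ κ₂)
    {c : σ j} {ℓ : ℝ} (hℓ0 : 0 ≤ ℓ)
    (hℓP : ∀ s, 0 < α s → ℓ ≤ P s j c) (hℓQ : ∀ t, 0 < β t → ℓ ≤ Q t j c)
    (hmin : ℓ < min (∑ s, α s * P s j c) (∑ t, β t * Q t j c))
    (hj : j ∉ Λ) {ω : (i : ι) → σ i} {δ : ℝ}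
    (hδ : ∀ Λ₀ ⊆ insert j Λ, |mixtureMarginal α P Λ₀ (Function.update ω j c)
      - mixtureMarginal β Q Λ₀ (Function.update ω j c)| ≤ δ) :
    (min (∑ s, α s * P s j c) (∑ t, β t * Q t j c) - ℓ) *
      |mixtureMarginal (reweight α (P · j c) ℓ) P Λ ω
        - mixtureMarginal (reweight β (Q · j c) ℓ) Q Λ ω| ≤ 3 * δ := by
  have hinsert := hδ (insert j Λ) Subset.rfl
  have hrest := hδ Λ (subset_insert j Λ)
  have hsingle := hδ {j} (singleton_subset_iff.2 (mem_insert_self j Λ))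
  have hℓ1 : ℓ ≤ 1 := by
    have hmean := (mixtureMarginal_mem_Icc hα hP {j} (Function.update ω j c)).2
    rw [mixtureMarginal_singleton, Function.update_self] at hmean
    exact (lt_min_iff.1 hmin).1.le.trans hmean
  rw [mixtureMarginal_update_of_notMem α P hj, mixtureMarginal_update_of_notMem β Q hj] at hrest
  rw [mixtureMarginal_singleton, mixtureMarginal_singleton, Function.update_self] at hsingle
  have hℓrest : |ℓ| * |mixtureMarginal α P Λ ω - mixtureMarginal β Q Λ ω| ≤ δ :=
    (mul_le_of_le_one_left (abs_nonneg _) ((abs_of_nonneg hℓ0).trans_le hℓ1)).trans hrest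
  linarith [min_sub_mul_abs_mixtureMarginal_reweight_sub_le hP hQ hα hβ hℓP hℓQ hmin hj ω]

end Mixture

/-- the key inequality `(min{P̄_j(c), Q̄_j(c)} − ℓ) · |mixture difference of the
reweighted mixtures on Λ'| ≤ 3δ`, where `ℓ` is the minimum of the coordinate-`j` marginal
probabilities of `c` over the active components, `δ` bounds the mixture discrepancy over all
subsets `Λ` of coordinates with `|Λ| ≤ K − 1` (with `K` the number of active components), and
`Λ' ⊆ I \ {j}` has `|Λ'| ≤ K − 2`. -/
theorem reweighted_discrepancy_bound {ι : Type*} [Fintype ι] [DecidableEq ι]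
    (q k₁ k₂ : ℕ) (j : ι)
    (P : Fin k₁ → ι → Fin q → ℝ) (Q : Fin k₂ → ι → Fin q → ℝ)
    (hP0 : ∀ s i c, 0 ≤ P s i c) (hP1 : ∀ s i, ∑ c, P s i c = 1)
    (hQ0 : ∀ t i c, 0 ≤ Q t i c) (hQ1 : ∀ t i, ∑ c, Q t i c = 1)
    (α : Fin k₁ → ℝ) (β : Fin k₂ → ℝ)
    (hα0 : ∀ s, 0 ≤ α s) (hα1 : ∑ s, α s = 1)
    (hβ0 : ∀ t, 0 ≤ β t) (hβ1 : ∑ t, β t = 1)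
    (hA : (Finset.univ.filter (fun s => 0 < α s)).Nonempty)
    (hB : (Finset.univ.filter (fun t => 0 < β t)).Nonempty)
    (c : Fin q) (ℓ : ℝ)
    (hℓ : ℓ = min ((Finset.univ.filter (fun s => 0 < α s)).inf' hA (fun s => P s j c))
                 ((Finset.univ.filter (fun t => 0 < β t)).inf' hB (fun t => Q t j c)))
    (hmin : ℓ < min (∑ s, α s * P s j c) (∑ t, β t * Q t j c))
    (δ : ℝ)
    (hδ : ∀ Λ : Finset ι,
      Λ.card ≤ (Finset.univ.filter (fun s => 0 < α s)).card
                 + (Finset.univ.filter (fun t => 0 < β t)).card - 1 →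
      ∀ ω : ι → Fin q,
        |(∑ s, α s * ∏ i ∈ Λ, P s i (ω i)) - ∑ t, β t * ∏ i ∈ Λ, Q t i (ω i)| ≤ δ)
    (Λ' : Finset ι) (hjΛ' : j ∉ Λ')
    (hcard : Λ'.card ≤ (Finset.univ.filter (fun s => 0 < α s)).card
                         + (Finset.univ.filter (fun t => 0 < β t)).card - 2)
    (ω' : ι → Fin q) :
    (min (∑ s, α s * P s j c) (∑ t, β t * Q t j c) - ℓ) *
      |(∑ s, (α s * (P s j c - ℓ) / ((∑ s', α s' * P s' j c) - ℓ)) * ∏ i ∈ Λ', P s i (ω' i))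
        - ∑ t, (β t * (Q t j c - ℓ) / ((∑ t', β t' * Q t' j c) - ℓ)) * ∏ i ∈ Λ', Q t i (ω' i)|
      ≤ 3 * δ := by
  have hℓPQ := hℓ.le
  simp only [le_min_iff, le_inf'_iff, mem_filter_univ] at hℓPQ
  have hcard_insert : #(insert j Λ') ≤ #{s | 0 < α s} + #{t | 0 < β t} - 1 := by
    have := card_insert_le j Λ'
    have := hA.card_pos
    have := hB.card_pos
    omega
  exact reweighted_discrepancy_bound_general
    (fun s i => mem_Icc_of_mem_stdSimplex ⟨hP0 s i, hP1 s i⟩)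
    (fun t i => mem_Icc_of_mem_stdSimplex ⟨hQ0 t i, hQ1 t i⟩) ⟨hα0, hα1⟩ ⟨hβ0, hβ1⟩
    (hℓ ▸ le_min (le_inf' _ _ fun s _ => hP0 s j c) (le_inf' _ _ fun t _ => hQ0 t j c))
    hℓPQ.1 hℓPQ.2 hmin hjΛ' fun Λ hΛ => hδ Λ ((card_le_card hΛ).trans hcard_insert) _
end

section
/- Fix integers q ≥ 1 and k₁, k₂ ≥ 1 and a coordinate j. For each s ∈ [k₁] let P_j^(s) be a distribution on [q], and for each t ∈ [k₂] let Q_j^(t) be a distribution on [q]; let ᾱ and β̄ be mixing weights on [k₁] and [k₂]. Fix c ∈ [q] and set ℓ = min{ min_{s: ᾱ^(s)>0} P_j^(s)(c), min_{t: β̄^(t)>0} Q_j^(t)(c) }, P̄_j(c) = Σ_s ᾱ^(s) P_j^(s)(c), Q̄_j(c) = Σ_t β̄^(t) Q_j^(t)(c). Assume min{P̄_j(c), Q̄_j(c)} > ℓ, and define ᾱ_c^(s) = ᾱ^(s)(P_j^(s)(c) − ℓ)/(P̄_j(c) − ℓ) and β̄_c^(t) = β̄^(t)(Q_j^(t)(c)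 − ℓ)/(Q̄_j(c) − ℓ). Then the number of positive entries strictly decreases: #{s : ᾱ_c^(s) > 0} + #{t : β̄_c^(t) > 0} ≤ #{s : ᾱ^(s) > 0} + #{t : β̄^(t) > 0} − 1. -/
open Finset

/-!
Positive normalizers preserve signs, so a component stays active after the reweighting exactly when
it was active and its value exceeds `ℓ`. No component becomes active, and an active component
attaining the minimum `ℓ` has its weight multiplied by `0`.
-/

/-- The active components of a mixture with weights `w`: the indices of positive weight. -/
def activeComponents {ι K : Type*} [Fintype ι] [Zero K] [LinearOrder K]
    (w : ι → K) : Finset ι := {i | 0 < w i}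

section Reweighting

variable {ι κ K : Type*} [Fintype ι] [Fintype κ] [Field K] [LinearOrder K]
  {w f : ι → K} {v g : κ → K} {ℓ : K}

/-- The mixing weights `ᾱ_c` left after extracting the common part `ℓ` from a mixture with weights
`w`, where `f i` is the value of the `i`-th component at `c`. -/
def residualWeight (w f : ι → K) (ℓ : K) (i : ι) : K :=
  w i * (f i - ℓ) / ((∑ j, w j * f j) - ℓ)

variable [IsStrictOrderedRing K]

lemma residualWeight_pos_iff {i : ι} (hw : 0 ≤ w i) (hℓ : ℓ < ∑ j, w j * f j) :
    0 < residualWeight w f ℓ i ↔ 0 < w i ∧ ℓ < f i := by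
  rw [residualWeight, div_pos_iff_of_pos_right (sub_pos.2 hℓ)]
  rcases hw.eq_or_lt with hzero | hpos
  · simp [← hzero]
  · simp [hpos]

lemma activeComponents_residualWeight (hw : ∀ i, 0 ≤ w i) (hℓ : ℓ < ∑ j, w j * f j) :
    activeComponents (residualWeight w f ℓ) = (activeComponents w).filter (ℓ < f ·) := by
  ext i
  simp [activeComponents, residualWeight_pos_iff (hw i) hℓ]

lemma card_activeComponents_residualWeight_le (hw : ∀ i, 0 ≤ w i) (hℓ : ℓ < ∑ j, w j * f j) :
    #(activeComponents (residualWeight w f ℓ)) ≤ #(activeComponents w) := by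
  rw [activeComponents_residualWeight hw hℓ]
  exact card_filter_le _ _

lemma card_activeComponents_residualWeight_lt (hw : ∀ i, 0 ≤ w i) (hℓ : ℓ < ∑ j, w j * f j)
    (hf : ∃ i ∈ activeComponents w, f i ≤ ℓ) :
    #(activeComponents (residualWeight w f ℓ)) < #(activeComponents w) := by
  rw [activeComponents_residualWeight hw hℓ]
  exact card_lt_card (filter_ssubset.2 (by simpa only [not_lt] using hf))

theorem active_component_count_decreases_general (hw : ∀ i, 0 ≤ w i) (hv : ∀ j, 0 ≤ v j)
    (hA : (activeComponents w).Nonempty) (hB : (activeComponents v).Nonempty)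
    (hℓ : ℓ = min ((activeComponents w).inf' hA f) ((activeComponents v).inf' hB g))
    (hmin : ℓ < min (∑ i, w i * f i) (∑ j, v j * g j)) :
    #(activeComponents (residualWeight w f ℓ)) + #(activeComponents (residualWeight v g ℓ)) <
      #(activeComponents w) + #(activeComponents v) := by
  obtain ⟨hℓf, hℓg⟩ := lt_min_iff.1 hmin
  rcases min_le_iff.1 hℓ.ge with hf | hg
  · exact add_lt_add_of_lt_of_le
      (card_activeComponents_residualWeight_lt hw hℓf ((inf'_le_iff hA).1 hf))
      (card_activeComponents_residualWeight_le hv hℓg)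
  · exact add_lt_add_of_le_of_lt
      (card_activeComponents_residualWeight_le hw hℓf)
      (card_activeComponents_residualWeight_lt hv hℓg ((inf'_le_iff hB).1 hg))

end Reweighting

/-- after reweighting by the extracted common part `ℓ` (the minimum of the
coordinate marginals of `c` over active components), the total number of active mixture
components strictly decreases. -/
theorem active_component_count_decreases (q k₁ k₂ : ℕ)
    (P : Fin k₁ → Fin q → ℝ) (Q : Fin k₂ → Fin q → ℝ)
    (hP0 : ∀ s c, 0 ≤ P s c) (hP1 : ∀ s, ∑ c, P s c = 1)
    (hQ0 : ∀ t c, 0 ≤ Q t c) (hQ1 : ∀ t, ∑ c, Q t c = 1)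
    (α : Fin k₁ → ℝ) (β : Fin k₂ → ℝ)
    (hα0 : ∀ s, 0 ≤ α s) (hα1 : ∑ s, α s = 1)
    (hβ0 : ∀ t, 0 ≤ β t) (hβ1 : ∑ t, β t = 1)
    (hA : (Finset.univ.filter (fun s => 0 < α s)).Nonempty)
    (hB : (Finset.univ.filter (fun t => 0 < β t)).Nonempty)
    (c : Fin q) (ℓ : ℝ)
    (hℓ : ℓ = min ((Finset.univ.filter (fun s => 0 < α s)).inf' hA (fun s => P s c))
                 ((Finset.univ.filter (fun t => 0 < β t)).inf' hB (fun t => Q t c)))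
    (hmin : ℓ < min (∑ s, α s * P s c) (∑ t, β t * Q t c)) :
    (Finset.univ.filter
        (fun s => 0 < α s * (P s c - ℓ) / ((∑ s', α s' * P s' c) - ℓ))).card
      + (Finset.univ.filter
        (fun t => 0 < β t * (Q t c - ℓ) / ((∑ t', β t' * Q t' c) - ℓ))).card
      ≤ (Finset.univ.filter (fun s => 0 < α s)).card
          + (Finset.univ.filter (fun t => 0 < β t)).card - 1 :=
  Nat.le_sub_one_of_lt (active_component_count_decreases_general hα0 hβ0 hA hB hℓ hmin)
end

section
/- For all integers n ≥ 0, q ≥ 1, and K ≥ 2: Σ_{j=1}^{n+1} Σ_{r=0}^{K−2} C(j−1, r) · q^r ≤ (nq + 1)^{K−1}, where C(·,·) denotes the binomial coefficient. -/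
/-!
For fixed `j`, the bound `C(j, r) ≤ j ^ r` reduces the inner sum to a geometric one:
`∑_{r ≤ k} C(j, r) q ^ r ≤ ∑_{r ≤ k} (j q) ^ r ≤ (j q + 1) ^ k`. With `k = K - 2`, each of the
`n + 1 ≤ n q + 1` inner sums is thus at most `(n q + 1) ^ (K - 2)`.
-/

section OrderedSemiring

open Finset

variable {R : Type*} [Semiring R] [PartialOrder R] [IsOrderedRing R]

lemma geom_sum_le_add_one_pow {x : R} (hx : 0 ≤ x) (k : ℕ) :
    ∑ r ∈ range (k + 1), x ^ r ≤ (x + 1) ^ k := by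
  induction k with
  | zero => simp
  | succ k ih =>
    have pow_le : x ^ k ≤ (x + 1) ^ k := by
      gcongr
      exact le_add_of_nonneg_right zero_le_one
    calc ∑ r ∈ range (k + 2), x ^ r
        = ∑ r ∈ range (k + 1), x ^ r + x ^ k * x := by rw [sum_range_succ, pow_succ]
      _ ≤ (x + 1) ^ k + (x + 1) ^ k * x := by gcongr
      _ = (x + 1) ^ (k + 1) := by rw [pow_succ, mul_add_one, add_comm]

lemma sum_choose_mul_pow_le_add_one_pow {q : R} (hq : 0 ≤ q) (j k : ℕ) :
    ∑ r ∈ range (k + 1), (j.choose r : R) * q ^ r ≤ (j * q + 1) ^ k :=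
  calc ∑ r ∈ range (k + 1), (j.choose r : R) * q ^ r
      ≤ ∑ r ∈ range (k + 1), (j * q) ^ r := by
        gcongr with r
        rw [(Nat.cast_commute j q).mul_pow]
        gcongr
        rw [← Nat.cast_pow]
        exact Nat.mono_cast (Nat.choose_le_pow j r)
    _ ≤ (j * q + 1) ^ k := geom_sum_le_add_one_pow (by positivity) k

theorem state_count_bound_general {q : R} (hq : 1 ≤ q) (n k : ℕ) :
    ∑ j ∈ range (n + 1), ∑ r ∈ range (k + 1), (j.choose r : R) * q ^ r
      ≤ (n * q + 1) ^ (k + 1) := by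
  have q_nonneg : 0 ≤ q := zero_le_one.trans hq
  have base_nonneg (j : ℕ) : 0 ≤ j * q + 1 := add_nonneg (by positivity) zero_le_one
  have inner_le : ∀ j ∈ range (n + 1),
      ∑ r ∈ range (k + 1), (j.choose r : R) * q ^ r ≤ (n * q + 1) ^ k := by
    intro j hj
    have hjn : j ≤ n := mem_range_succ_iff.mp hj
    calc ∑ r ∈ range (k + 1), (j.choose r : R) * q ^ r
        ≤ (j * q + 1) ^ k := sum_choose_mul_pow_le_add_one_pow q_nonneg j k
      _ ≤ (n * q + 1) ^ k := by
        gcongr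
        exact base_nonneg j
  calc ∑ j ∈ range (n + 1), ∑ r ∈ range (k + 1), (j.choose r : R) * q ^ r
      ≤ (n + 1) * (n * q + 1) ^ k := by
        simpa using sum_le_card_nsmul _ _ _ inner_le
    _ ≤ (n * q + 1) * (n * q + 1) ^ k := by
        gcongr
        · exact pow_nonneg (base_nonneg n) k
        · exact le_mul_of_one_le_right n.cast_nonneg hq
    _ = (n * q + 1) ^ (k + 1) := (pow_succ' _ k).symm

end OrderedSemiring

/-- the state-counting inequality
`Σ_{j=1}^{n+1} Σ_{r=0}^{K−2} C(j−1, r) q^r ≤ (nq+1)^(K−1)` for `q ≥ 1`, `K ≥ 2`.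
(Here the outer sum is reindexed as `j' = j − 1` ranging over `0, …, n`.) -/
theorem state_count_bound (n q K : ℕ) (hq : 1 ≤ q) (hK : 2 ≤ K) :
    ∑ j ∈ Finset.range (n + 1), ∑ r ∈ Finset.range (K - 1), Nat.choose j r * q ^ r
      ≤ (n * q + 1) ^ (K - 1) := by
  obtain ⟨k, rfl⟩ := Nat.exists_eq_add_of_le' hK
  exact_mod_cast state_count_bound_general hq n k
end

section
/- Let N ≥ 3 and m ≥ 1 be integers and let C₁, …, C_m be 3-clauses over Boolean variables x₁, …, x_N, each involving exactly three distinct variables. For ω ∈ {0,1}^N let F(ω) be the number of clauses falsified by ω, and let S = #{ω ∈ {0,1}^N : F(ω) = 0} be the number of satisfying assignments of C₁ ∧ ⋯ ∧ C_m. Define distributions on {0,1}^{N+1}, whose points are written (b, ω) with b ∈ {0,1} and ω ∈ {0,1}^N: for each j ∈ [m], let U_j be the distribution that puts b = 0 and fixes the three variables of C_j to the unique assignment falsifying C_j, uniform on the other N − 3 coordinates; let V₀ (resp. V₁) fix b = 0 (resp. b = 1) and be uniform on ω. Let P = (1/m) Σ_{j=1}^m U_j and Q = (1/(2m)) V₀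 + (1 − 1/(2m)) V₁. Then dTV(P, Q) = 1 − 1/(2m) + 2^{−N} S / (2m). -/
open Finset

/-! On the union of the cubes of falsifying assignments, the mixture `P` dominates `Q`: a point of
one of these cubes gets mass at least `2 ^ (3 - N) / m` from `P`, and only `2 ^ (-N) / (2 * m)`
from `Q`. Off that union `P` vanishes. Hence the distance is the `Q`-mass of the complement of the
union, which consists of the half `b = 1`, of mass `1 - 1 / (2 * m)`, and of the satisfying
assignments in the half `b = 0`, each of mass `2 ^ (-N) / (2 * m)`. -/

section TotalVariation

variable {α : Type*} [Fintype α]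

/-- The total variation distance between two distributions on a finite type, given by their
probability mass functions. -/
noncomputable def tvDist (P Q : α → ℝ) : ℝ :=
  1 / 2 * ∑ x, |P x - Q x|

theorem tvDist_eq_sum_sub {P Q : α → ℝ} {s : Finset α}
    (hsum : ∑ x, P x = ∑ x, Q x) (hs : ∀ x ∈ s, P x ≤ Q x) (hsc : ∀ x ∉ s, Q x ≤ P x) :
    tvDist P Q = ∑ x ∈ s, (Q x - P x) := by
  classical
  have habs_s : ∑ x ∈ s, |P x - Q x| = ∑ x ∈ s, (Q x - P x) :=
    sum_congr rfl fun x hx => by rw [abs_sub_comm, abs_of_nonneg (sub_nonneg.2 (hs x hx))]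
  have habs_compl : ∑ x ∈ sᶜ, |P x - Q x| = ∑ x ∈ sᶜ, (P x - Q x) :=
    sum_congr rfl fun x hx => abs_of_nonneg (sub_nonneg.2 (hsc x (mem_compl.1 hx)))
  have hbalance : ∑ x ∈ s, (P x - Q x) + ∑ x ∈ sᶜ, (P x - Q x) = 0 := by
    rw [sum_add_sum_compl, sum_sub_distrib, hsum, sub_self]
  rw [tvDist, ← sum_add_sum_compl s, habs_s, habs_compl]
  simp only [sum_sub_distrib] at hbalance ⊢
  linarith

end TotalVariation

section UniformDistribution

variable {α κ : Type*} [DecidableEq α]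

/-- The probability mass function of the uniform distribution on the finite set `s`. It is
identically `0` when `s` is empty. -/
noncomputable def uniformDist (s : Finset α) (x : α) : ℝ :=
  if x ∈ s then (#s : ℝ)⁻¹ else 0

theorem uniformDist_of_mem {s : Finset α} {x : α} (hx : x ∈ s) :
    uniformDist s x = (#s : ℝ)⁻¹ :=
  if_pos hx

theorem uniformDist_of_notMem {s : Finset α} {x : α} (hx : x ∉ s) : uniformDist s x = 0 :=
  if_neg hx

theorem uniformDist_nonneg (s : Finset α) (x : α) : 0 ≤ uniformDist s x := by
  unfold uniformDist
  positivity

theorem sum_uniformDist (s t : Finset α) :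
    ∑ x ∈ t, uniformDist s x = #(t ∩ s) / #s := by
  simp only [uniformDist, sum_ite_mem, sum_const, nsmul_eq_mul, div_eq_mul_inv]

theorem sum_univ_uniformDist [Fintype α] {s : Finset α} (hs : s.Nonempty) :
    ∑ x, uniformDist s x = 1 := by
  rw [sum_uniformDist, univ_inter, div_self (Nat.cast_ne_zero.2 hs.card_ne_zero)]

variable [Fintype κ]

/-- The probability mass function of the equally weighted mixture of the uniform distributions on
the sets `B j`. -/
noncomputable def uniformMixture (B : κ → Finset α) (x : α) : ℝ :=
  1 / Fintype.card κ * ∑ j, uniformDist (B j) x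

theorem sum_univ_uniformMixture [Fintype α] [Nonempty κ] {B : κ → Finset α}
    (hB : ∀ j, (B j).Nonempty) : ∑ x, uniformMixture B x = 1 := by
  simp only [uniformMixture]
  rw [← mul_sum, sum_comm, sum_congr rfl fun j _ => sum_univ_uniformDist (hB j), sum_const,
    nsmul_one, card_univ, one_div_mul_cancel (Nat.cast_ne_zero.2 Fintype.card_ne_zero)]

theorem uniformMixture_eq_zero {B : κ → Finset α} {x : α} (hx : ∀ j, x ∉ B j) :
    uniformMixture B x = 0 := by
  rw [uniformMixture, sum_eq_zero fun j _ => uniformDist_of_notMem (hx j), mul_zero]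

theorem le_uniformMixture {B : κ → Finset α} {x : α} {j : κ} (hx : x ∈ B j) :
    1 / Fintype.card κ * (#(B j) : ℝ)⁻¹ ≤ uniformMixture B x := by
  rw [← uniformDist_of_mem hx, uniformMixture]
  gcongr
  exact single_le_sum (f := fun j => uniformDist (B j) x) (fun i _ => uniformDist_nonneg _ _)
    (mem_univ j)

theorem tvDist_uniformMixture_eq_sum_notMem [Fintype α] [Nonempty κ] {B : κ → Finset α}
    (hB : ∀ j, (B j).Nonempty) {Q : α → ℝ} (hQ : ∀ x, 0 ≤ Q x) (hQ_sum : ∑ x, Q x = 1)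
    (hQ_le : ∀ j, ∀ x ∈ B j, Q x ≤ 1 / Fintype.card κ * (#(B j) : ℝ)⁻¹) :
    tvDist (uniformMixture B) Q = ∑ x with ∀ j, x ∉ B j, Q x := by
  have hzero : ∀ x ∈ ({x | ∀ j, x ∉ B j} : Finset α), uniformMixture B x = 0 := fun x hx =>
    uniformMixture_eq_zero ((mem_filter_univ x).1 hx)
  have hdom : ∀ x ∉ ({x | ∀ j, x ∉ B j} : Finset α), Q x ≤ uniformMixture B x := by
    intro x hx
    obtain ⟨j, hj⟩ : ∃ j, x ∈ B j := by simpa using hx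
    exact (hQ_le j x hj).trans (le_uniformMixture hj)
  rw [tvDist_eq_sum_sub ((sum_univ_uniformMixture hB).trans hQ_sum.symm)
    (fun x hx => (hzero x hx).trans_le (hQ x)) hdom]
  exact sum_congr rfl fun x hx => by rw [hzero x hx, sub_zero]

end UniformDistribution

section BiasedBit

variable {Ω κ : Type*} [Fintype Ω] [DecidableEq Ω]

/-- The probability mass function of a pair of a bit, equal to `false` with probability `q`, and an
independent uniform element of `Ω`. -/
noncomputable def biasedBitUniform (q : ℝ) (p : Bool × Ω) : ℝ :=
  q * uniformDist ({false} ×ˢ univ) p + (1 - q) * uniformDist ({true} ×ˢ univ) p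

theorem biasedBitUniform_false (q : ℝ) (ω : Ω) :
    biasedBitUniform q (false, ω) = q / Fintype.card Ω := by
  simp [biasedBitUniform, uniformDist, div_eq_mul_inv]

theorem biasedBitUniform_nonneg {q : ℝ} (hq₀ : 0 ≤ q) (hq₁ : q ≤ 1) (p : Bool × Ω) :
    0 ≤ biasedBitUniform q p :=
  add_nonneg (mul_nonneg hq₀ (uniformDist_nonneg _ _))
    (mul_nonneg (sub_nonneg.2 hq₁) (uniformDist_nonneg _ _))

theorem sum_biasedBitUniform (q : ℝ) (t : Finset (Bool × Ω)) :
    ∑ p ∈ t, biasedBitUniform q p =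
      q * (#(t ∩ {false} ×ˢ univ) / Fintype.card Ω) +
        (1 - q) * (#(t ∩ {true} ×ˢ univ) / Fintype.card Ω) := by
  simp only [biasedBitUniform, sum_add_distrib, ← mul_sum, sum_uniformDist, card_product,
    card_singleton, one_mul, card_univ]

theorem sum_univ_biasedBitUniform [Nonempty Ω] (q : ℝ) :
    ∑ p : Bool × Ω, biasedBitUniform q p = 1 := by
  simp [sum_biasedBitUniform]

theorem sum_biasedBitUniform_notMem_false_product [Nonempty Ω] [Fintype κ] (q : ℝ)
    (A : κ → Finset Ω) :
    ∑ p with ∀ j, p ∉ ({false} : Finset Bool) ×ˢ A j, biasedBitUniform q p =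
      1 - q + q * (#{ω | ∀ j, ω ∉ A j} / Fintype.card Ω) := by
  have hfalse : ({p | ∀ j, p ∉ ({false} : Finset Bool) ×ˢ A j} : Finset _) ∩ {false} ×ˢ univ =
      {false} ×ˢ ({ω | ∀ j, ω ∉ A j} : Finset Ω) := by
    ext ⟨b, ω⟩
    cases b <;> simp
  have htrue : ({p | ∀ j, p ∉ ({false} : Finset Bool) ×ˢ A j} : Finset _) ∩ {true} ×ˢ univ =
      {true} ×ˢ univ := by
    ext ⟨b, ω⟩
    cases b <;> simp
  rw [sum_biasedBitUniform, hfalse, htrue]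
  simp [add_comm]

theorem tvDist_uniformMixture_biasedBitUniform [Fintype κ] [Nonempty κ] {A : κ → Finset Ω}
    (hA : ∀ j, (A j).Nonempty) {q : ℝ} (hq₀ : 0 ≤ q)
    (hq : q ≤ 1 / Fintype.card κ) :
    tvDist (uniformMixture fun j => ({false} : Finset Bool) ×ˢ A j) (biasedBitUniform q) =
      1 - q + q * (#{ω | ∀ j, ω ∉ A j} / Fintype.card Ω) := by
  have hq₁ : q ≤ 1 := hq.trans <|
    (div_le_one (Nat.cast_pos.2 Fintype.card_pos)).2 (Nat.one_le_cast.2 Fintype.card_pos)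
  have : Nonempty Ω := (hA (Classical.arbitrary κ)).to_type
  rw [tvDist_uniformMixture_eq_sum_notMem (fun j => (singleton_nonempty false).product (hA j))
    (biasedBitUniform_nonneg hq₀ hq₁) (sum_univ_biasedBitUniform q),
    sum_biasedBitUniform_notMem_false_product]
  rintro j ⟨b, ω⟩ hp
  obtain ⟨rfl, -⟩ : b = false ∧ ω ∈ A j := by
    simpa only [mem_product, mem_singleton] using hp
  have : (0 : ℝ) < #(A j) := Nat.cast_pos.2 (hA j).card_pos
  rw [biasedBitUniform_false, card_product, card_singleton, one_mul, div_eq_mul_inv]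
  gcongr
  exact card_le_univ (A j)

end BiasedBit

section Subcube

variable {ι α : Type*} [Fintype ι] [DecidableEq ι] [Fintype α] [DecidableEq α]

/-- The subcube of `ι → α` obtained by fixing the coordinates in `T` to their values under `a`. For
`α = Bool`, these are the assignments falsifying the clause on the variables `T` whose literals are
all false under `a`. -/
def subcube (T : Finset ι) (a : ι → α) : Finset (ι → α) :=
  {ω | ∀ i ∈ T, ω i = a i}

theorem mem_subcube {T : Finset ι} {a ω : ι → α} : ω ∈ subcube T a ↔ ∀ i ∈ T, ω i = a i :=
  mem_filter_univ ω

theorem subcube_nonempty (T : Finset ι) (a : ι → α) : (subcube T a).Nonempty :=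
  ⟨a, mem_subcube.2 fun _ _ => rfl⟩

theorem subcube_eq_piFinset (T : Finset ι) (a : ι → α) :
    subcube T a = Fintype.piFinset fun i => if i ∈ T then {a i} else univ := by
  ext ω
  rw [mem_subcube, Fintype.mem_piFinset]
  refine forall_congr' fun i => ?_
  by_cases hi : i ∈ T <;> simp [hi]

theorem card_subcube (T : Finset ι) (a : ι → α) :
    #(subcube T a) = Fintype.card α ^ (Fintype.card ι - #T) := by
  simp only [subcube_eq_piFinset, Fintype.card_piFinset, apply_ite card, card_singleton,
    card_univ, prod_ite, prod_const, one_pow, one_mul, filter_notMem_eq_sdiff,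
    ← compl_eq_univ_sdiff, card_compl]

theorem uniformDist_product_subcube (b : Bool) (T : Finset ι) (a : ι → Bool)
    (p : Bool × (ι → Bool)) :
    uniformDist ({b} ×ˢ subcube T a) p =
      if p.1 = b ∧ ∀ i ∈ T, p.2 i = a i then (1 / 2 : ℝ) ^ (Fintype.card ι - #T) else 0 := by
  simp [uniformDist, mem_product, mem_subcube, card_subcube, -singleton_product]

theorem uniformDist_product_univ (b : Bool) (p : Bool × (ι → Bool)) :
    uniformDist ({b} ×ˢ univ) p = if p.1 = b then (1 / 2 : ℝ) ^ Fintype.card ι else 0 := by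
  simp [uniformDist, mem_product, -singleton_product]

end Subcube

theorem dTV_3sat_reduction_general {ι κ : Type*} [Fintype ι] [DecidableEq ι] [Fintype κ]
    [Nonempty κ] (V : κ → Finset ι) (a : κ → ι → Bool) {q : ℝ} (hq₀ : 0 ≤ q)
    (hq : q ≤ 1 / Fintype.card κ) :
    tvDist
      (fun p : Bool × (ι → Bool) => 1 / (Fintype.card κ : ℝ) * ∑ j,
        if p.1 = false ∧ ∀ i ∈ V j, p.2 i = a j i
          then (1 / 2 : ℝ) ^ (Fintype.card ι - #(V j)) else 0)
      (fun p => q * (if p.1 = false then (1 / 2 : ℝ) ^ Fintype.card ι else 0) +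
        (1 - q) * (if p.1 = true then (1 / 2 : ℝ) ^ Fintype.card ι else 0)) =
      1 - q + (1 / 2 : ℝ) ^ Fintype.card ι *
        #{ω : ι → Bool | ∀ j, ¬ ∀ i ∈ V j, ω i = a j i} * q := by
  have h := tvDist_uniformMixture_biasedBitUniform (fun j => subcube_nonempty (V j) (a j)) hq₀ hq
  unfold uniformMixture biasedBitUniform at h
  simp only [uniformDist_product_subcube, uniformDist_product_univ, mem_subcube] at h
  rw [h, Fintype.card_fun, Fintype.card_bool, Nat.cast_pow, Nat.cast_ofNat, one_div_pow]
  ring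

/-- the exact TV-distance between the mixture `P = (1/m) Σ_j U_j` of the
clause-falsifying subcubes (with an extra bit fixed to `false`) and the mixture
`Q = (1/(2m)) V₀ + (1 − 1/(2m)) V₁`, namely `1 − 1/(2m) + 2^{−N} S/(2m)` where `S` is the
number of satisfying assignments of the 3-CNF formula. -/
theorem dTV_3sat_reduction (N m : ℕ) (hN : 3 ≤ N) (hm : 1 ≤ m)
    (V : Fin m → Finset (Fin N)) (hV : ∀ j, (V j).card = 3)
    (a : Fin m → Fin N → Bool) :
    (1/2 : ℝ) * ∑ p : Bool × (Fin N → Bool),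
        |((1 / (m : ℝ)) * ∑ j,
            (if p.1 = false ∧ ∀ i ∈ V j, p.2 i = a j i then ((1 : ℝ) / 2) ^ (N - 3) else 0))
          - ((1 / (2 * (m : ℝ))) * (if p.1 = false then ((1 : ℝ) / 2) ^ N else 0)
              + (1 - 1 / (2 * (m : ℝ))) * (if p.1 = true then ((1 : ℝ) / 2) ^ N else 0))|
      = 1 - 1 / (2 * (m : ℝ))
        + ((1 : ℝ) / 2) ^ N
          * ((Finset.univ.filter (fun ω : Fin N → Bool =>
                ∀ j, ¬ (∀ i ∈ V j, ω i = a j i))).card : ℝ) / (2 * (m : ℝ)) := by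
  have : Nonempty (Fin m) := ⟨⟨0, hm⟩⟩
  have hq : 1 / (2 * (m : ℝ)) ≤ 1 / Fintype.card (Fin m) := by
    rw [Fintype.card_fin]
    gcongr
    linarith
  have hdist := dTV_3sat_reduction_general V a (by positivity) hq
  simp only [tvDist, hV, Fintype.card_fin, ← div_eq_mul_one_div] at hdist
  -- The two sides differ only in `Decidable` instances.
  convert hdist
end
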